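/- Let E1, E2 ∈ ℝ^{N×N} be symmetric positive definite matrices and e1, e2 ∈ ℝ^N. Then 𝓔(E1, e1) ⊆ 𝓔(E2, e2) if and only if there exists λ ≥ 0 such that the (N+1)×(N+1) block matrix G(λ) = [[λ E1 − E2, E2 e2 − λ E1 e1], [(E2 e2 − λ E1 e1)ᵀ, λ e1ᵀ E1 e1 − e2ᵀ E2 e2 − λ + 1]] is positive semidefinite. -/

import Mathlib

open Matrix

/-- The `(N+1) × (N+1)` symmetric block matrix `[[A, b], [bᵀ, c]]`. -/
def quadBlock (N : ℕ) (A : Matrix (Fin N) (Fin N) ℝ) (b : Fin N → ℝ) (c : ℝ) :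
    Matrix (Fin N ⊕ Unit) (Fin N ⊕ Unit) ℝ :=
  Matrix.fromBlocks A (Matrix.of fun i _ => b i) (Matrix.of fun _ j => b j)
    (Matrix.of fun _ _ => c)

/-- Homogenised quadratic form of an ellipsoid. -/
def hq {N : ℕ} (E : Matrix (Fin N) (Fin N) ℝ) (e : Fin N → ℝ) (z : (Fin N → ℝ) × ℝ) : ℝ :=
  (z.1 - z.2 • e) ⬝ᵥ E *ᵥ (z.1 - z.2 • e) - z.2 ^ 2

lemma hq_line {N : ℕ} (E : Matrix (Fin N) (Fin N) ℝ) (e : Fin N → ℝ)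
    (u v : (Fin N → ℝ) × ℝ) :
    ∃ b : ℝ, ∀ t : ℝ, hq E e (t • u + v) = t ^ 2 * hq E e u + t * b + hq E e v := by
  refine ⟨(u.1 - u.2 • e) ⬝ᵥ E *ᵥ (v.1 - v.2 • e) + (v.1 - v.2 • e) ⬝ᵥ E *ᵥ (u.1 - u.2 • e)
    - 2 * u.2 * v.2, fun t => ?_⟩
  have h : (t • u + v).1 - (t • u + v).2 • e = t • (u.1 - u.2 • e) + (v.1 - v.2 • e) := by
    ext i
    simp
    ring
  unfold hq
  rw [h]
  simp only [mulVec_add, mulVec_smul, add_dotProduct, dotProduct_add, smul_dotProduct,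
    dotProduct_smul, smul_eq_mul, Prod.snd_add, Prod.smul_snd]
  ring

lemma two_roots (a b c A B C : ℝ) (ha : a < 0) (hc : 0 < c)
    (h : ∀ t : ℝ, t ^ 2 * a + t * b + c ≤ 0 → t ^ 2 * A + t * B + C ≤ 0) :
    A * c ≤ C * a := by
  have hD : 0 < b ^ 2 - 4 * a * c := by nlinarith [mul_pos (neg_pos.2 ha) hc, sq_nonneg b]
  obtain ⟨d, hd0, hd⟩ : ∃ d : ℝ, 0 < d ∧ d ^ 2 = b ^ 2 - 4 * a * c :=
    ⟨√(b ^ 2 - 4 * a * c), Real.sqrt_pos.2 hD, Real.sq_sqrt hD.le⟩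
  have hac := mul_pos (neg_pos.2 ha) hc
  have hbd : |b| < d := abs_lt_of_sq_lt_sq (by nlinarith) hd0.le
  obtain ⟨hb1, hb2⟩ := abs_lt.1 hbd
  have ha' : a ≠ 0 := ha.ne
  have e1 : ((-b + d) / (2 * a)) ^ 2 * a + ((-b + d) / (2 * a)) * b + c = 0 := by
    field_simp
    nlinarith
  have e2 : ((-b - d) / (2 * a)) ^ 2 * a + ((-b - d) / (2 * a)) * b + c = 0 := by
    field_simp
    nlinarith
  have h1 := h _ e1.le
  have h2 := h _ e2.le
  have k1 := mul_le_mul_of_nonneg_left h1 (show 0 ≤ b + d by linarith)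
  have k2 := mul_le_mul_of_nonneg_left h2 (show 0 ≤ d - b by linarith)
  have key : (b + d) * (((-b + d) / (2 * a)) ^ 2 * A + ((-b + d) / (2 * a)) * B + C)
      + (d - b) * (((-b - d) / (2 * a)) ^ 2 * A + ((-b - d) / (2 * a)) * B + C)
      = 2 * d / a * (C * a - A * c) := by
    have hc' : c = (b ^ 2 - d ^ 2) / (4 * a) := by
      field_simp
      linarith
    rw [hc']
    field_simp
    ring
  have h3 : 2 * d / a * (C * a - A * c) ≤ 0 := by linarith
  have h4 : 2 * d / a < 0 := div_neg_of_pos_of_neg (by linarith) ha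
  nlinarith

lemma s_lem {V : Type*} [AddCommGroup V] [Module ℝ V] (p q : V → ℝ)
    (hp : ∀ u v, ∃ b : ℝ, ∀ t : ℝ, p (t • u + v) = t ^ 2 * p u + t * b + p v)
    (hq : ∀ u v, ∃ b : ℝ, ∀ t : ℝ, q (t • u + v) = t ^ 2 * q u + t * b + q v)
    (h : ∀ z, p z ≤ 0 → q z ≤ 0) (z0 : V) (hz0 : p z0 < 0) :
    ∃ l : ℝ, 0 ≤ l ∧ ∀ z, 0 ≤ l * p z - q z := by
  let S : Set ℝ := insert 0 {r | ∃ v, 0 < p v ∧ r = q v / p v}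
  have hub : ∀ u, p u < 0 → ∀ r ∈ S, r ≤ q u / p u := by
    rintro u hu r (rfl | ⟨v, hv, rfl⟩)
    · exact div_nonneg_of_nonpos (h u hu.le) hu.le
    · obtain ⟨b, hb⟩ := hp u v
      obtain ⟨B, hB⟩ := hq u v
      have := two_roots (p u) b (p v) (q u) B (q v) hu hv (fun t ht => by
        rw [← hB]; rw [← hb] at ht; exact h _ ht)
      rw [div_le_iff₀ hv, div_mul_eq_mul_div, le_div_iff_of_neg hu]
      exact this
  have hbdd : BddAbove S := ⟨_, hub z0 hz0⟩
  refine ⟨sSup S, le_csSup hbdd (Or.inl rfl), fun z => ?_⟩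
  rcases lt_trichotomy (p z) 0 with hz | hz | hz
  · have h1 : sSup S ≤ q z / p z := csSup_le ⟨0, Or.inl rfl⟩ (hub z hz)
    rw [le_div_iff_of_neg hz] at h1
    linarith
  · have := h z hz.le
    rw [hz]
    linarith
  · have h1 : q z / p z ≤ sSup S := le_csSup hbdd (Or.inr ⟨z, hz, rfl⟩)
    rw [div_le_iff₀ hz] at h1
    linarith

lemma symm_dot {N : ℕ} {E : Matrix (Fin N) (Fin N) ℝ} (hE : E.IsHermitian) (x y : Fin N → ℝ) :
    x ⬝ᵥ E *ᵥ y = y ⬝ᵥ E *ᵥ x := by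
  have hT : Eᵀ = E := by simpa using hE.eq
  rw [dotProduct_mulVec, ← mulVec_transpose, hT, dotProduct_comm]

lemma block_form {N : ℕ} {E1 E2 : Matrix (Fin N) (Fin N) ℝ}
    (hE1 : E1.IsHermitian) (hE2 : E2.IsHermitian) (e1 e2 : Fin N → ℝ) (l : ℝ)
    (x : Fin N ⊕ Unit → ℝ) :
    x ⬝ᵥ (quadBlock N (l • E1 - E2) (E2 *ᵥ e2 - l • (E1 *ᵥ e1))
          (l * (e1 ⬝ᵥ E1 *ᵥ e1) - e2 ⬝ᵥ E2 *ᵥ e2 - l + 1)) *ᵥ x =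
      l * hq E1 e1 (x ∘ Sum.inl, x (Sum.inr ())) - hq E2 e2 (x ∘ Sum.inl, x (Sum.inr ())) := by
  obtain ⟨y, t, rfl⟩ : ∃ (y : Fin N → ℝ) (t : ℝ), x = Sum.elim y (fun _ => t) :=
    ⟨x ∘ Sum.inl, x (Sum.inr ()), by ext (i | i) <;> rfl⟩
  have hc : ∀ b : Fin N → ℝ, (Matrix.of fun i (_ : Unit) => b i) *ᵥ (fun _ => t) = t • b := by
    intro b
    ext i
    simp [mulVec, dotProduct, mul_comm]
  have hr : ∀ b : Fin N → ℝ, (Matrix.of fun (_ : Unit) j => b j) *ᵥ y = fun _ => b ⬝ᵥ y := by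
    intro b
    ext i
    simp [mulVec]
  have hs : ∀ c : ℝ, (Matrix.of fun (_ _ : Unit) => c) *ᵥ (fun _ => t) = fun _ => c * t := by
    intro c
    ext i
    simp [mulVec, dotProduct]
  have hu : ∀ s : Unit → ℝ, (fun _ : Unit => t) ⬝ᵥ s = t * s () := by
    intro s
    simp [dotProduct]
  unfold quadBlock hq
  rw [fromBlocks_mulVec]
  simp only [Sum.elim_comp_inl, Sum.elim_comp_inr, Sum.elim_inr, sumElim_dotProduct_sumElim,
    hc, hr, hs, hu, Pi.add_apply]
  simp only [mulVec_sub, sub_mulVec, smul_mulVec, mulVec_smul, sub_dotProduct, dotProduct_sub,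
    dotProduct_add, smul_dotProduct, dotProduct_smul, smul_eq_mul]
  rw [dotProduct_comm (E2 *ᵥ e2) y, dotProduct_comm (E1 *ᵥ e1) y, symm_dot hE1 e1 y,
    symm_dot hE2 e2 y]
  ring

lemma block_herm {N : ℕ} {A : Matrix (Fin N) (Fin N) ℝ} (hA : A.IsHermitian)
    (b : Fin N → ℝ) (c : ℝ) : (quadBlock N A b c).IsHermitian := by
  unfold quadBlock
  refine IsHermitian.fromBlocks hA ?_ ?_
  · ext i j
    simp
  · ext i j
    simp

/-- Containment of ellipsoids: `𝓔(E1, e1) ⊆ 𝓔(E2, e2)` iff there exists `λ ≥ 0` such that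
`G(λ) = [[λ E1 − E2, E2 e2 − λ E1 e1], [(E2 e2 − λ E1 e1)ᵀ, λ e1ᵀ E1 e1 − e2ᵀ E2 e2 − λ + 1]]`
is positive semidefinite. -/
theorem stmt_8 (N : ℕ) (E1 E2 : Matrix (Fin N) (Fin N) ℝ)
    (hE1 : E1.PosDef) (hE2 : E2.PosDef) (e1 e2 : Fin N → ℝ) :
    {s : Fin N → ℝ | (s - e1) ⬝ᵥ E1 *ᵥ (s - e1) ≤ 1} ⊆
        {s : Fin N → ℝ | (s - e2) ⬝ᵥ E2 *ᵥ (s - e2) ≤ 1} ↔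
      ∃ lam : ℝ, 0 ≤ lam ∧
        (quadBlock N (lam • E1 - E2) (E2 *ᵥ e2 - lam • (E1 *ᵥ e1))
          (lam * (e1 ⬝ᵥ E1 *ᵥ e1) - e2 ⬝ᵥ E2 *ᵥ e2 - lam + 1)).PosSemidef := by
  have key : ∀ l : ℝ, (quadBlock N (l • E1 - E2) (E2 *ᵥ e2 - l • (E1 *ᵥ e1))
          (l * (e1 ⬝ᵥ E1 *ᵥ e1) - e2 ⬝ᵥ E2 *ᵥ e2 - l + 1)).PosSemidef ↔
      ∀ z, 0 ≤ l * hq E1 e1 z - hq E2 e2 z := by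
    intro l
    constructor
    · intro h z
      have := h.dotProduct_mulVec_nonneg (Sum.elim z.1 (fun _ => z.2))
      rw [star_trivial, block_form hE1.1 hE2.1] at this
      exact this
    · intro h
      refine PosSemidef.of_dotProduct_mulVec_nonneg (block_herm ?_ _ _) fun x => ?_
      · exact IsHermitian.sub (by
          have := hE1.1
          unfold IsHermitian at *
          rw [conjTranspose_smul, this, star_trivial]) hE2.1
      · rw [star_trivial, block_form hE1.1 hE2.1]
        exact h _
  have hone : ∀ (E : Matrix (Fin N) (Fin N) ℝ) (e s : Fin N → ℝ),
      hq E e (s, 1) = (s - e) ⬝ᵥ E *ᵥ (s - e) - 1 := by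
    intro E e s
    simp [hq]
  simp only [key]
  constructor
  · intro h
    refine s_lem _ _ (hq_line E1 e1) (hq_line E2 e2) ?_ (e1, 1) (by simp [hone])
    rintro ⟨x, t⟩ hz
    by_cases ht : t = 0
    · subst ht
      have hx : x = 0 := by
        by_contra hne
        have := hE1.dotProduct_mulVec_pos hne
        simp [hq] at hz this
        linarith
      subst hx
      simp [hq]
    · have hsc : ∀ (E : Matrix (Fin N) (Fin N) ℝ) (e : Fin N → ℝ),
          hq E e (x, t) = t ^ 2 * hq E e (t⁻¹ • x, 1) := by
        intro E e
        have hx : x - t • e = t • (t⁻¹ • x - e) := by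
          rw [smul_sub, smul_inv_smul₀ ht]
        rw [hone]
        simp only [hq, hx, mulVec_smul, smul_dotProduct, dotProduct_smul, smul_eq_mul]
        ring
      have ht2 : 0 < t ^ 2 := by positivity
      rw [hsc, hone] at hz ⊢
      have h1 : t⁻¹ • x ∈ {s : Fin N → ℝ | (s - e1) ⬝ᵥ E1 *ᵥ (s - e1) ≤ 1} := by
        have := nonpos_of_mul_nonpos_right hz ht2
        simp only [Set.mem_setOf_eq]
        linarith
      have h2 := h h1
      simp only [Set.mem_setOf_eq] at h2
      exact mul_nonpos_of_nonneg_of_nonpos ht2.le (by linarith)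
  · rintro ⟨l, hl, h⟩ s hs
    have h1 := h (s, 1)
    simp only [hone] at h1
    simp only [Set.mem_setOf_eq] at hs ⊢
    nlinarith
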